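/- Let n ≥ 1 and b ∈ X_n. Then there exists a unique polynomial P ∈ ℂ[z] that is admissible for b; that is, there is exactly one polynomial P of degree at most n − 1 such that f_P(z) = P(z)/∏_{j=1}^{2n}(z − b_j)^{1/2} satisfies the matching conditions (i) for i = 2, …, n and the normalization (ii) at b_1. -/

import Mathlib

open scoped BigOperators
open Finset

noncomputable section

/-- The chamber `X_n = {b : b₁ < b₂ < ⋯ < b₂ₙ}`. -/
def chamber (n : ℕ) : Set (Fin (2*n) → ℝ) := {b | StrictMono b}

/-- For `k : Fin n` (0-based), `idx n k false` is the index of `b_{2k-1}` (1-based),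
and `idx n k true` is the index of `b_{2k}` (1-based). -/
def idx (n : ℕ) (k : Fin n) (s : Bool) : Fin (2*n) :=
  if s then ⟨2*k.val+1, by have := k.isLt; omega⟩ else ⟨2*k.val, by have := k.isLt; omega⟩

/-- The sign `σ_i ∈ {±1}` encoded by a boolean configuration. -/
def sgn {n : ℕ} (σ : Fin n → Bool) (i : Fin n) : ℝ := if σ i then 1 else -1

/-- The cross-ratio `χ_{ij}(b)`. -/
def chi (n : ℕ) (b : Fin (2*n) → ℝ) (i j : Fin n) : ℝ :=
  ((b (idx n i true) - b (idx n j true)) * (b (idx n i false) - b (idx n j false))) /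
  ((b (idx n i true) - b (idx n j false)) * (b (idx n i false) - b (idx n j true)))

/-- The multiple SLE_{16/3} partition function `Z`. -/
def Zfun (n : ℕ) (b : Fin (2*n) → ℝ) : ℝ :=
  (∏ k : Fin n, (b (idx n k true) - b (idx n k false)) ^ (-(1:ℝ)/8)) *
  ((∑ σ : Fin n → Bool, ∏ p ∈ Finset.univ.filter (fun p : Fin n × Fin n => p.1 < p.2),
      chi n b p.1 p.2 ^ (sgn σ p.1 * sgn σ p.2 / 4)) ^ ((1:ℝ)/2))

/-- Partial derivative in the `i`-th coordinate. -/
def pderiv' {m : ℕ} (i : Fin m) (f : (Fin m → ℝ) → ℝ) (x : Fin m → ℝ) : ℝ :=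
  fderiv ℝ f x (Pi.single i 1)


/-- The upper half-plane `ℍ`. -/
def UHP : Set ℂ := {z | 0 < z.im}

/-- `D(z) = ∏_{j=1}^{2n} (z − b_j)^{1/2}` with the principal branch of the square root. -/
def Dfun (n : ℕ) (b : Fin (2*n) → ℝ) (z : ℂ) : ℂ :=
  ∏ j : Fin (2*n), (z - (b j : ℂ)) ^ ((1:ℂ)/2)

/-- `f_P(z) = P(z)/D(z)`. -/
def fP (n : ℕ) (b : Fin (2*n) → ℝ) (P : Polynomial ℂ) (z : ℂ) : ℂ :=
  Polynomial.eval z P / Dfun n b z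

/-- `P` is admissible for `b`: `deg P ≤ n − 1`, the matching conditions (i) hold at the
pairs `(b_{2i−1}, b_{2i})`, `i = 2, …, n`, and the normalization (ii) holds at `b₁`. -/
def Admissible (n : ℕ) (hn : 0 < n) (b : Fin (2*n) → ℝ) (P : Polynomial ℂ) : Prop :=
  P.natDegree ≤ n - 1 ∧
  (∀ k : Fin n, 1 ≤ k.val → ∃ L : ℂ,
      Filter.Tendsto
        (fun z : ℂ => fP n b P z * (z - (b (idx n k false) : ℂ)) ^ ((1:ℂ)/2)
          * (z - (b (idx n k true) : ℂ)) ^ ((1:ℂ)/2))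
        (nhdsWithin (b (idx n k false) : ℂ) UHP) (nhds L) ∧
      Filter.Tendsto
        (fun z : ℂ => fP n b P z * (z - (b (idx n k false) : ℂ)) ^ ((1:ℂ)/2)
          * (z - (b (idx n k true) : ℂ)) ^ ((1:ℂ)/2))
        (nhdsWithin (b (idx n k true) : ℂ) UHP) (nhds (-L))) ∧
  Filter.Tendsto
    (fun z : ℂ => (z - (b ⟨0, by omega⟩ : ℂ)) ^ ((1:ℂ)/2) * fP n b P z)
    (nhdsWithin (b ⟨0, by omega⟩ : ℂ) UHP) (nhds Complex.I)

end

/-- The product of the square roots over `j ∈ S`, evaluated at a boundary point. -/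
noncomputable def Qs {n : ℕ} (b : Fin (2*n) → ℝ) (S : Finset (Fin (2*n))) (z : ℂ) : ℂ :=
  ∏ j ∈ S, (z - (b j : ℂ)) ^ ((1:ℂ)/2)

lemma uhp_neBot (x : ℝ) : (nhdsWithin (x : ℂ) UHP).NeBot := by
  rw [← mem_closure_iff_nhdsWithin_neBot]
  have : closure UHP = {z : ℂ | 0 ≤ z.im} := Complex.closure_setOfPred_lt_im 0
  rw [this]; simp

lemma sqrt_tendsto (x c : ℝ) (h : x ≠ c) :
    Filter.Tendsto (fun z : ℂ => (z - (c:ℂ)) ^ ((1:ℂ)/2)) (nhdsWithin (x : ℂ) UHP)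
      (nhds (((x:ℂ) - c) ^ ((1:ℂ)/2))) := by
  have hne : ((x:ℂ) - c) ≠ 0 := by
    rw [sub_ne_zero]; exact_mod_cast h
  have hsub : Filter.Tendsto (fun z : ℂ => z - (c:ℂ)) (nhdsWithin (x : ℂ) UHP)
      (nhdsWithin ((x:ℂ) - c) {z : ℂ | 0 ≤ z.im}) := by
    apply tendsto_nhdsWithin_of_tendsto_nhds_of_eventually_within
    · exact ((continuous_id.sub continuous_const).tendsto (x:ℂ)).mono_left nhdsWithin_le_nhds
    · filter_upwards [self_mem_nhdsWithin] with z hz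
      have : 0 < z.im := hz
      simp; exact this.le
  have hlog : Filter.Tendsto Complex.log (nhdsWithin ((x:ℂ) - c) {z : ℂ | 0 ≤ z.im})
      (nhds (Complex.log ((x:ℂ) - c))) := by
    rcases lt_or_gt_of_ne h with h1 | h1
    · exact Complex.continuousWithinAt_log_of_re_neg_of_im_zero (by simpa using h1) (by simp)
    · exact (continuousAt_clog (by left; simpa using h1)).tendsto.mono_left nhdsWithin_le_nhds
  have h2 : Filter.Tendsto (fun z : ℂ => Complex.exp (Complex.log (z - c) * (1/2)))
      (nhdsWithin (x : ℂ) UHP) (nhds (((x:ℂ) - c) ^ ((1:ℂ)/2))) := by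
    rw [Complex.cpow_def_of_ne_zero hne]
    exact (Complex.continuous_exp.tendsto _).comp ((hlog.comp hsub).mul_const _)
  refine h2.congr' ?_
  filter_upwards [self_mem_nhdsWithin] with z hz
  have hz' : 0 < z.im := hz
  rw [Complex.cpow_def_of_ne_zero]
  intro h0
  have := congrArg Complex.im h0
  simp at this; linarith

lemma uhp_sqrt_ne (z : ℂ) (hz : z ∈ UHP) (c : ℝ) : (z - (c:ℂ)) ^ ((1:ℂ)/2) ≠ 0 := by
  have hz' : 0 < z.im := hz
  intro h
  rw [Complex.cpow_eq_zero_iff] at h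
  have := congrArg Complex.im h.1
  simp at this; linarith

lemma Qs_tendsto {n : ℕ} (b : Fin (2*n) → ℝ) (S : Finset (Fin (2*n))) (x : ℝ)
    (h : ∀ j ∈ S, x ≠ b j) :
    Filter.Tendsto (Qs b S) (nhdsWithin (x : ℂ) UHP) (nhds (Qs b S x)) :=
  tendsto_finsetProd _ fun j hj => sqrt_tendsto x (b j) (h j hj)

lemma sqrt_val (t : ℝ) : (t:ℂ) ^ ((1:ℂ)/2) =
    (if t < 0 then Complex.I else 1) * ((Real.sqrt |t| : ℝ) : ℂ) := by
  split_ifs with h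
  · rw [Complex.ofReal_cpow_of_nonpos h.le, abs_of_neg h, Real.sqrt_eq_rpow,
      Complex.ofReal_cpow (by linarith)]
    have : Complex.exp (Real.pi * Complex.I * (1/2)) = Complex.I := by
      have h2 := Complex.exp_pi_div_two_mul_I
      rw [show (Real.pi : ℂ) * Complex.I * (1/2) = Real.pi / 2 * Complex.I by ring, h2]
    rw [this]; push_cast; ring
  · push Not at h
    rw [abs_of_nonneg h, Real.sqrt_eq_rpow, Complex.ofReal_cpow h]
    push_cast; ring

/-- The unimodular phase of the product. -/
noncomputable def phase {n : ℕ} (b : Fin (2*n) → ℝ) (S : Finset (Fin (2*n))) (x : ℝ) : ℂ :=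
  ∏ j ∈ S, (if x - b j < 0 then Complex.I else 1)

/-- The modulus of the product. -/
noncomputable def modl {n : ℕ} (b : Fin (2*n) → ℝ) (S : Finset (Fin (2*n))) (x : ℝ) : ℝ :=
  ∏ j ∈ S, Real.sqrt |x - b j|

lemma Qs_val {n : ℕ} (b : Fin (2*n) → ℝ) (S : Finset (Fin (2*n))) (x : ℝ) :
    Qs b S x = phase b S x * (modl b S x : ℂ) := by
  unfold Qs phase modl
  push_cast
  rw [← Finset.prod_mul_distrib]
  refine Finset.prod_congr rfl fun j _ => ?_
  rw [← sqrt_val]; push_cast; rfl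

lemma phase_ne {n : ℕ} (b : Fin (2*n) → ℝ) (S : Finset (Fin (2*n))) (x : ℝ) :
    phase b S x ≠ 0 := by
  refine Finset.prod_ne_zero_iff.2 fun j _ => ?_
  split_ifs <;> simp

lemma modl_pos {n : ℕ} (b : Fin (2*n) → ℝ) (S : Finset (Fin (2*n))) (x : ℝ)
    (h : ∀ j ∈ S, x ≠ b j) : 0 < modl b S x :=
  Finset.prod_pos fun j hj => Real.sqrt_pos.2 (abs_pos.2 (sub_ne_zero.2 (h j hj)))

lemma Qs_ne {n : ℕ} (b : Fin (2*n) → ℝ) (S : Finset (Fin (2*n))) (x : ℝ)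
    (h : ∀ j ∈ S, x ≠ b j) : Qs b S x ≠ 0 := by
  rw [Qs_val]
  exact mul_ne_zero (phase_ne b S x) (by exact_mod_cast (modl_pos b S x h).ne')

/-- All indices outside of the `k`-th pair. -/
def Sk (n : ℕ) (k : Fin n) : Finset (Fin (2*n)) :=
  (Finset.univ.erase (idx n k false)).erase (idx n k true)

lemma idx_false_val (n : ℕ) (k : Fin n) : (idx n k false).val = 2 * k.val := by simp [idx]
lemma idx_true_val (n : ℕ) (k : Fin n) : (idx n k true).val = 2 * k.val + 1 := by simp [idx]

lemma idx_ne (n : ℕ) (k : Fin n) : idx n k true ≠ idx n k false := by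
  intro h
  have := congrArg Fin.val h
  rw [idx_false_val, idx_true_val] at this
  omega

lemma Sk_ne {n : ℕ} {b : Fin (2*n) → ℝ} (hb : StrictMono b) (k : Fin n) (s : Bool) :
    ∀ j ∈ Sk n k, b (idx n k s) ≠ b j := by
  intro j hj h
  have := hb.injective h
  subst this
  cases s <;> simp [Sk] at hj

lemma phase_eq {n : ℕ} {b : Fin (2*n) → ℝ} (hb : StrictMono b) (k : Fin n) :
    phase b (Sk n k) (b (idx n k false)) = phase b (Sk n k) (b (idx n k true)) := by
  refine Finset.prod_congr rfl fun j hj => ?_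
  have : b (idx n k false) - b j < 0 ↔ b (idx n k true) - b j < 0 := by
    rw [sub_neg, sub_neg, hb.lt_iff_lt, hb.lt_iff_lt, Fin.lt_def, Fin.lt_def, idx_false_val,
      idx_true_val]
    simp only [Sk, Finset.mem_erase, ne_eq, Fin.ext_iff, idx_false_val, idx_true_val] at hj
    omega
  simp only [this]

lemma pair_tendsto {n : ℕ} {b : Fin (2*n) → ℝ} (hb : StrictMono b) (k : Fin n) (s : Bool)
    (P : Polynomial ℂ) :
    Filter.Tendsto
        (fun z : ℂ => fP n b P z * (z - (b (idx n k false) : ℂ)) ^ ((1:ℂ)/2)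
          * (z - (b (idx n k true) : ℂ)) ^ ((1:ℂ)/2))
        (nhdsWithin (b (idx n k s) : ℂ) UHP)
        (nhds (P.eval (b (idx n k s) : ℂ) / Qs b (Sk n k) (b (idx n k s)))) := by
  have h1 : Filter.Tendsto (fun z : ℂ => P.eval z / Qs b (Sk n k) z)
      (nhdsWithin (b (idx n k s) : ℂ) UHP)
      (nhds (P.eval (b (idx n k s) : ℂ) / Qs b (Sk n k) (b (idx n k s)))) :=
    ((P.continuous.tendsto _).mono_left nhdsWithin_le_nhds).div
      (Qs_tendsto b _ _ (Sk_ne hb k s)) (Qs_ne b _ _ (Sk_ne hb k s))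
  refine h1.congr' ?_
  filter_upwards [self_mem_nhdsWithin] with z hz
  have hD : Dfun n b z = (z - (b (idx n k false) : ℂ)) ^ ((1:ℂ)/2) *
      ((z - (b (idx n k true) : ℂ)) ^ ((1:ℂ)/2) * Qs b (Sk n k) z) := by
    unfold Dfun Qs Sk
    rw [Finset.mul_prod_erase (Finset.univ.erase (idx n k false))
      (fun j => (z - (b j : ℂ)) ^ ((1:ℂ)/2)) (by simp [idx_ne]),
      Finset.mul_prod_erase Finset.univ
      (fun j => (z - (b j : ℂ)) ^ ((1:ℂ)/2)) (by simp)]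
  have hq : Qs b (Sk n k) z ≠ 0 := Finset.prod_ne_zero_iff.2 fun j _ => uhp_sqrt_ne z hz _
  have h2 := uhp_sqrt_ne z hz (b (idx n k false))
  have h3 := uhp_sqrt_ne z hz (b (idx n k true))
  rw [fP, hD]
  generalize (z - (b (idx n k false) : ℂ)) ^ ((1:ℂ)/2) = A at *
  generalize (z - (b (idx n k true) : ℂ)) ^ ((1:ℂ)/2) = B at *
  field_simp

lemma single_ne {n : ℕ} {b : Fin (2*n) → ℝ} (hb : StrictMono b) (i : Fin (2*n)) :
    ∀ j ∈ Finset.univ.erase i, b i ≠ b j := by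
  intro j hj h
  have := hb.injective h
  subst this
  simp at hj

lemma single_tendsto {n : ℕ} {b : Fin (2*n) → ℝ} (hb : StrictMono b) (i : Fin (2*n))
    (P : Polynomial ℂ) :
    Filter.Tendsto (fun z : ℂ => (z - (b i : ℂ)) ^ ((1:ℂ)/2) * fP n b P z)
        (nhdsWithin (b i : ℂ) UHP)
        (nhds (P.eval (b i : ℂ) / Qs b (Finset.univ.erase i) (b i))) := by
  have h1 : Filter.Tendsto (fun z : ℂ => P.eval z / Qs b (Finset.univ.erase i) z)
      (nhdsWithin (b i : ℂ) UHP)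
      (nhds (P.eval (b i : ℂ) / Qs b (Finset.univ.erase i) (b i))) :=
    ((P.continuous.tendsto _).mono_left nhdsWithin_le_nhds).div
      (Qs_tendsto b _ _ (single_ne hb i)) (Qs_ne b _ _ (single_ne hb i))
  refine h1.congr' ?_
  filter_upwards [self_mem_nhdsWithin] with z hz
  have hD : Dfun n b z = (z - (b i : ℂ)) ^ ((1:ℂ)/2) * Qs b (Finset.univ.erase i) z := by
    unfold Dfun Qs
    rw [Finset.mul_prod_erase Finset.univ
      (fun j => (z - (b j : ℂ)) ^ ((1:ℂ)/2)) (by simp)]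
  have hq : Qs b (Finset.univ.erase i) z ≠ 0 :=
    Finset.prod_ne_zero_iff.2 fun j _ => uhp_sqrt_ne z hz _
  have h2 := uhp_sqrt_ne z hz (b i)
  rw [fP, hD]
  generalize (z - (b i : ℂ)) ^ ((1:ℂ)/2) = A at *
  field_simp

/-- The linear functionals defining admissibility. -/
noncomputable def Lmap (n : ℕ) (b : Fin (2*n) → ℝ) : Polynomial ℂ →ₗ[ℂ] (Fin n → ℂ) where
  toFun P k := if k.val = 0 then P.eval (b (idx n k false) : ℂ) else
    P.eval (b (idx n k false) : ℂ) * (modl b (Sk n k) (b (idx n k true)) : ℂ) +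
    P.eval (b (idx n k true) : ℂ) * (modl b (Sk n k) (b (idx n k false)) : ℂ)
  map_add' P Q := by
    ext k; simp only [Polynomial.eval_add, Pi.add_apply]; split_ifs <;> ring
  map_smul' c P := by
    ext k
    simp only [Polynomial.eval_smul, smul_eq_mul, RingHom.id_apply, Pi.smul_apply]
    split_ifs <;> ring

lemma Lmap_apply (n : ℕ) (b : Fin (2*n) → ℝ) (P : Polynomial ℂ) (k : Fin n) :
    Lmap n b P k = if k.val = 0 then P.eval (b (idx n k false) : ℂ) else
    P.eval (b (idx n k false) : ℂ) * (modl b (Sk n k) (b (idx n k true)) : ℂ) +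
    P.eval (b (idx n k true) : ℂ) * (modl b (Sk n k) (b (idx n k false)) : ℂ) := rfl

/-- The right hand side of the linear system. -/
noncomputable def rhs (n : ℕ) (b : Fin (2*n) → ℝ) (k : Fin n) : ℂ :=
  if k.val = 0 then Complex.I * Qs b (Finset.univ.erase (idx n k false)) (b (idx n k false))
  else 0

lemma pair_iff {n : ℕ} {b : Fin (2*n) → ℝ} (hb : StrictMono b) (k : Fin n) (p q : ℂ) :
    q / Qs b (Sk n k) (b (idx n k true)) = -(p / Qs b (Sk n k) (b (idx n k false))) ↔
    p * (modl b (Sk n k) (b (idx n k true)) : ℂ) +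
    q * (modl b (Sk n k) (b (idx n k false)) : ℂ) = 0 := by
  rw [Qs_val, Qs_val, phase_eq hb]
  have h1 := phase_ne b (Sk n k) (b (idx n k true))
  have h2 : (modl b (Sk n k) (b (idx n k true)) : ℂ) ≠ 0 := by
    exact_mod_cast (modl_pos b _ _ (Sk_ne hb k true)).ne'
  have h3 : (modl b (Sk n k) (b (idx n k false)) : ℂ) ≠ 0 := by
    exact_mod_cast (modl_pos b _ _ (Sk_ne hb k false)).ne'
  generalize phase b (Sk n k) (b (idx n k true)) = e at *
  generalize (modl b (Sk n k) (b (idx n k true)) : ℂ) = u at *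
  generalize (modl b (Sk n k) (b (idx n k false)) : ℂ) = v at *
  rw [← neg_div, div_eq_div_iff (mul_ne_zero h1 h2) (mul_ne_zero h1 h3)]
  constructor
  · intro h
    apply mul_left_cancel₀ h1
    linear_combination h
  · intro h
    linear_combination e * h

lemma admissible_iff (n : ℕ) (hn : 1 ≤ n) {b : Fin (2*n) → ℝ} (hb : StrictMono b)
    (P : Polynomial ℂ) :
    Admissible n hn b P ↔ P ∈ Polynomial.degreeLT ℂ n ∧ Lmap n b P = rhs n b := by
  have hdeg : P.natDegree ≤ n - 1 ↔ P ∈ Polynomial.degreeLT ℂ n := by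
    rw [Polynomial.mem_degreeLT]
    constructor
    · intro h
      exact lt_of_le_of_lt (Polynomial.degree_le_of_natDegree_le h)
        (by exact_mod_cast (by omega : n - 1 < n))
    · intro h
      by_cases hP : P = 0
      · simp [hP]
      · have := (Polynomial.natDegree_lt_iff_degree_lt hP).2 h
        omega
  have hidx : idx n ⟨0, hn⟩ false = ⟨0, by omega⟩ := by simp [idx]
  unfold Admissible
  rw [hdeg]
  refine and_congr_right fun _ => ?_
  have key0 : Filter.Tendsto
    (fun z : ℂ => (z - (b ⟨0, by omega⟩ : ℂ)) ^ ((1:ℂ)/2) * fP n b P z)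
    (nhdsWithin (b ⟨0, by omega⟩ : ℂ) UHP) (nhds Complex.I) ↔
    Lmap n b P ⟨0, hn⟩ = rhs n b ⟨0, hn⟩ := by
    rw [Lmap_apply, rhs, if_pos rfl, if_pos rfl, hidx]
    have ht := single_tendsto hb ⟨0, by omega⟩ P
    have hne := Qs_ne b _ _ (single_ne hb ⟨0, by omega⟩)
    rw [← div_eq_iff hne]
    haveI := uhp_neBot (b ⟨0, by omega⟩)
    exact ⟨fun h => tendsto_nhds_unique ht h, fun h => h ▸ ht⟩
  rw [key0]
  constructor
  · rintro ⟨h1, h0⟩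
    ext k
    by_cases hk : k.val = 0
    · have : k = ⟨0, hn⟩ := Fin.ext hk
      rw [this]; exact h0
    · obtain ⟨L, hL1, hL2⟩ := h1 k (by omega)
      haveI := uhp_neBot (b (idx n k false))
      haveI := uhp_neBot (b (idx n k true))
      have e1 := tendsto_nhds_unique (pair_tendsto hb k false P) hL1
      have e2 := tendsto_nhds_unique (pair_tendsto hb k true P) hL2
      rw [Lmap_apply, rhs, if_neg hk, if_neg hk]
      rw [← pair_iff hb, e1, e2]
  · intro h
    refine ⟨fun k hk => ⟨_, pair_tendsto hb k false P, ?_⟩, congrFun h _⟩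
    have hk' : ¬ k.val = 0 := by omega
    have := congrFun h k
    rw [Lmap_apply, rhs, if_neg hk', if_neg hk', ← pair_iff hb] at this
    rw [← this]
    exact pair_tendsto hb k true P

lemma real_zero (R : Polynomial ℝ) (x y u v : ℝ) (hxy : x ≤ y) (hu : 0 < u) (hv : 0 < v)
    (h : R.eval x * u + R.eval y * v = 0) : ∃ t ∈ Set.Icc x y, R.eval t = 0 := by
  have hc : ContinuousOn (fun t => R.eval t) (Set.Icc x y) := R.continuous.continuousOn
  rcases le_total (R.eval x) 0 with h0 | h0
  · have : 0 ≤ R.eval y := by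
      by_contra h'
      push Not at h'
      nlinarith [mul_nonneg (neg_nonneg.2 h0) hu.le, mul_pos (neg_pos.2 h') hv]
    exact intermediate_value_Icc hxy hc ⟨h0, this⟩
  · have : R.eval y ≤ 0 := by
      by_contra h'
      push Not at h'
      nlinarith [mul_nonneg h0 hu.le, mul_pos h' hv]
    exact intermediate_value_Icc' hxy hc ⟨this, h0⟩

lemma real_inj {n : ℕ} {b : Fin (2*n) → ℝ} (hb : StrictMono b) (hn : 1 ≤ n)
    (R : Polynomial ℝ) (hR : R.natDegree < n)
    (h0 : ∀ k : Fin n, k.val = 0 → R.eval (b (idx n k false)) = 0)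
    (h1 : ∀ k : Fin n, k.val ≠ 0 →
      R.eval (b (idx n k false)) * modl b (Sk n k) (b (idx n k true)) +
      R.eval (b (idx n k true)) * modl b (Sk n k) (b (idx n k false)) = 0) : R = 0 := by
  have hle : ∀ k : Fin n, b (idx n k false) ≤ b (idx n k true) := fun k =>
    hb.monotone (by rw [Fin.le_def, idx_false_val, idx_true_val]; omega)
  have : ∀ k : Fin n, ∃ t ∈ Set.Icc (b (idx n k false)) (b (idx n k true)), R.eval t = 0 := by
    intro k
    by_cases hk : k.val = 0
    · exact ⟨_, ⟨le_rfl, hle k⟩, h0 k hk⟩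
    · exact real_zero R _ _ _ _ (hle k) (modl_pos b _ _ (Sk_ne hb k true))
        (modl_pos b _ _ (Sk_ne hb k false)) (h1 k hk)
  choose t ht1 ht2 using this
  have hmono : StrictMono t := by
    intro i j hij
    refine lt_of_le_of_lt (ht1 i).2 (lt_of_lt_of_le (hb ?_) (ht1 j).1)
    rw [Fin.lt_def, idx_false_val, idx_true_val]
    rw [Fin.lt_def] at hij
    omega
  exact Polynomial.eq_zero_of_natDegree_lt_card_of_eval_eq_zero R hmono.injective ht2
    (by simpa using hR)

lemma re_zero {n : ℕ} {b : Fin (2*n) → ℝ} (hb : StrictMono b) (hn : 1 ≤ n)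
    (P : Polynomial ℂ) (hP : P ∈ Polynomial.degreeLT ℂ n) (hL : Lmap n b P = 0) (i : ℕ) :
    (P.coeff i).re = 0 := by
  rw [Polynomial.mem_degreeLT] at hP
  have hcoef := (Polynomial.degree_lt_iff_coeff_zero P n).1 hP
  have hPn : P.natDegree < n := by
    by_cases h : P = 0
    · simp [h]; omega
    · exact (Polynomial.natDegree_lt_iff_degree_lt h).2 hP
  let R : Polynomial ℝ := ∑ i ∈ Finset.range n, Polynomial.monomial i (P.coeff i).re
  have hRc : ∀ i, R.coeff i = if i < n then (P.coeff i).re else 0 := by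
    intro i
    simp only [R, Polynomial.finset_sum_coeff, Polynomial.coeff_monomial]
    simp
  have hRe : ∀ x : ℝ, R.eval x = (P.eval (x:ℂ)).re := by
    intro x
    rw [Polynomial.eval_eq_sum_range' hPn, Complex.re_sum]
    simp only [R, Polynomial.eval_finset_sum, Polynomial.eval_monomial]
    refine Finset.sum_congr rfl fun i _ => ?_
    rw [← Complex.ofReal_pow, Complex.re_mul_ofReal]
  have hRn : R.natDegree < n := by
    have : R.natDegree ≤ n - 1 := by
      rw [Polynomial.natDegree_le_iff_coeff_eq_zero]
      intro N hN
      rw [hRc, if_neg (by omega)]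
    omega
  have hR0 : R = 0 := by
    apply real_inj hb hn R hRn
    · intro k hk
      have := congrFun hL k
      rw [Lmap_apply, if_pos hk] at this
      rw [hRe, this]; simp
    · intro k hk
      have := congrArg Complex.re (congrFun hL k)
      rw [Lmap_apply, if_neg hk] at this
      rw [hRe, hRe]
      simpa [Complex.re_mul_ofReal] using this
  by_cases hi : i < n
  · have := hRc i
    rw [hR0, if_pos hi] at this
    simpa using this.symm
  · rw [hcoef i (by omega)]; simp

lemma Lmap_inj {n : ℕ} {b : Fin (2*n) → ℝ} (hb : StrictMono b) (hn : 1 ≤ n)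
    (P : Polynomial ℂ) (hP : P ∈ Polynomial.degreeLT ℂ n) (hL : Lmap n b P = 0) : P = 0 := by
  ext i
  have h1 := re_zero hb hn P hP hL i
  have h2 := re_zero hb hn (Complex.I • P) (Submodule.smul_mem _ _ hP)
    (by rw [map_smul, hL, smul_zero]) i
  apply Complex.ext
  · simpa using h1
  · simpa using h2

/-- existence and uniqueness of the admissible polynomial. -/
theorem exists_unique_admissible (n : ℕ) (hn : 1 ≤ n)
    (b : Fin (2*n) → ℝ) (hb : b ∈ chamber n) :
    ∃! P : Polynomial ℂ, Admissible n hn b P := by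
  have hb' : StrictMono b := hb
  simp only [admissible_iff n hn hb']
  let e := Polynomial.degreeLTEquiv ℂ n
  let ψ : (Fin n → ℂ) →ₗ[ℂ] (Fin n → ℂ) :=
    (Lmap n b).comp ((Polynomial.degreeLT ℂ n).subtype.comp e.symm.toLinearMap)
  have hψ : Function.Injective ψ := by
    rw [← LinearMap.ker_eq_bot, LinearMap.ker_eq_bot']
    intro m hm
    have h := Lmap_inj hb' hn _ (e.symm m).2 hm
    have h2 : e.symm m = 0 := Subtype.ext h
    simpa using h2
  obtain ⟨m, hm⟩ := LinearMap.injective_iff_surjective.1 hψ (rhs n b)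
  refine ⟨(e.symm m : Polynomial ℂ), ⟨(e.symm m).2, hm⟩, ?_⟩
  rintro P ⟨hP, hL⟩
  have hm' : Lmap n b (e.symm m : Polynomial ℂ) = rhs n b := hm
  exact sub_eq_zero.1 (Lmap_inj hb' hn _ (Submodule.sub_mem _ hP (e.symm m).2)
    (by rw [map_sub, hL, hm', sub_self]))
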